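/- Let n ≥ 1 and let X be a space that is sequentially (n−1)-connected at x₀ ∈ X. Suppose f : I^n → X is continuous and U ⊆ (0,1)^n is open with f(∂U) = {x₀}. Then for every Whitney cover 𝒞 of U there exists a continuous g : I^n → X such that: f is homotopic to g by a homotopy constant on I^n \ U; g(∂C) = {x₀} for every C ∈ 𝒞; and for each C ∈ 𝒞 there is an n-cube K ⊆ int(C) with g|_K equal to f|_C up to the canonical affine reparameterization. -/

import Mathlib

open Set unitInterval

/-- Membership in the closed `n`-cube with corners `c, d`. -/
def inCube {n : ℕ} (c d : Fin n → ℝ) (y : Fin n → I) : Prop :=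
  ∀ i, c i ≤ (y i : ℝ) ∧ (y i : ℝ) ≤ d i

/-- Membership in the interior of the `n`-cube with corners `c, d`. -/
def inCubeInt {n : ℕ} (c d : Fin n → ℝ) (y : Fin n → I) : Prop :=
  ∀ i, c i < (y i : ℝ) ∧ (y i : ℝ) < d i

/-- Membership in the boundary of the `n`-cube with corners `c, d`. -/
def onCubeBdry {n : ℕ} (c d : Fin n → ℝ) (y : Fin n → I) : Prop :=
  inCube c d y ∧ ∃ i, (y i : ℝ) = c i ∨ (y i : ℝ) = d i

/-- The canonical increasing affine map sending the cube with corners `c, d` onto the cube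
with corners `c', d'` (clamped back into `I` coordinatewise). -/
noncomputable def cubeAffine {n : ℕ} (c d c' d' : Fin n → ℝ) (y : Fin n → I) : Fin n → I :=
  fun i => Set.projIcc (0:ℝ) 1 zero_le_one
    (c' i + ((y i : ℝ) - c i) / (d i - c i) * (d' i - c' i))


/-- A countable family of maps clusters at (converges toward) a point. -/
def ClustersAt {K Z X : Type*} [TopologicalSpace Z] [TopologicalSpace X]
    (f : K → C(Z, X)) (x : X) : Prop :=
  ∀ U ∈ nhds x, {k : K | ¬ Set.range (f k) ⊆ U}.Finite

/-- `X` is sequentially `n`-connected at `x`: for each `0 ≤ k ≤ n`, every sequence of based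
`k`-loops (maps `I^k → X` sending the boundary of the cube, i.e. `S^k → X` based maps, to `x`)
that converges to `x` admits a sequence of based null-homotopies converging to `x`. -/
def SeqNConnectedAt (n : ℕ) (X : Type*) [TopologicalSpace X] (x : X) : Prop :=
  ∀ k ≤ n, ∀ f : ℕ → C((Fin k → I), X),
    (∀ m, ∀ y ∈ Cube.boundary (Fin k), f m y = x) →
    ClustersAt f x →
    ∃ H : ℕ → C((Fin k → I) × I, X),
      (∀ m y, H m (y, 0) = f m y) ∧
      (∀ m y, H m (y, 1) = x) ∧
      (∀ m t, ∀ y ∈ Cube.boundary (Fin k), H m (y, t) = x) ∧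
      ClustersAt H x

/-! The cubes of a Whitney cover and their intersections form a locally finite complex of boxes. By
induction on `j < n`, `f` is deformed on the `j`-skeleton of this complex to the constant map `x₀`:
the homotopy found on the `(j - 1)`-skeleton extends over each `j`-dimensional box `B` through the
retraction of `B × I` onto its bottom and its side, and the based `j`-spheres obtained at its end
are null-homotopic by sequential connectedness. Since `f(∂U) = {x₀}` and the cubes shrink to `∂U`,
all these homotopies can be chosen to cluster at `x₀` along the cubes, which is what keeps them
continuous when they are extended by `f` outside `U`. On the `n`-dimensional cubes only the
retraction is used. It expands a cube from its midpoint, so that at the end of the homotopy the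
concentric cube of half the size carries a copy of `f`. -/

open Filter Topology

/-! ### Homotopies clustering at a point -/

section Concat

variable {Z X : Type*}

/-- The concatenation of two homotopies. They are plain functions on `Z × I`, so that they can be
continuous on `A × I` only, for some `A ⊆ Z`. -/
noncomputable def homotopyConcat (h k : Z × I → X) (p : Z × I) : X :=
  if (p.2 : ℝ) ≤ 1 / 2 then h (p.1, projIcc 0 1 zero_le_one (2 * p.2))
  else k (p.1, projIcc 0 1 zero_le_one (2 * p.2 - 1))

lemma homotopyConcat_zero (h k : Z × I → X) (z : Z) : homotopyConcat h k (z, 0) = h (z, 0) := by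
  simp [homotopyConcat]

lemma homotopyConcat_one (h k : Z × I → X) (z : Z) : homotopyConcat h k (z, 1) = k (z, 1) := by
  norm_num [homotopyConcat]

lemma mapsTo_homotopyConcat {h k : Z × I → X} {A : Set Z} {W : Set X}
    (hh : MapsTo h (A ×ˢ univ) W) (hk : MapsTo k (A ×ˢ univ) W) :
    MapsTo (homotopyConcat h k) (A ×ˢ univ) W := by
  intro p hp
  unfold homotopyConcat
  split_ifs
  exacts [hh ⟨hp.1, mem_univ _⟩, hk ⟨hp.1, mem_univ _⟩]

end Concat

section General

variable {Z X κ : Type*} [TopologicalSpace Z] [TopologicalSpace X]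

/-- The family `E` is locally finite at every point of `A`. Mathlib's `LocallyFinite` is the case
`A = univ`; the cubes of a Whitney cover accumulate at the boundary of the set they cover. -/
def LocallyFiniteOn (E : κ → Set Z) (A : Set Z) : Prop :=
  ∀ z ∈ A, ∃ N ∈ 𝓝 z, {i | (E i ∩ N).Nonempty}.Finite

namespace LocallyFiniteOn

variable {E : κ → Set Z} {A : Set Z}

lemma finite_setOf_mem (hE : LocallyFiniteOn E A) {z : Z} (hz : z ∈ A) : {i | z ∈ E i}.Finite := by
  obtain ⟨N, hN, hfin⟩ := hE z hz
  exact hfin.subset fun i hi => ⟨z, hi, mem_of_mem_nhds hN⟩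

lemma exists_nhds_forall_mem (hE : LocallyFiniteOn E A) (hcl : ∀ i, IsClosed (E i)) {z : Z}
    (hz : z ∈ A) : ∃ N ∈ 𝓝 z, ∀ i, (E i ∩ N).Nonempty → z ∈ E i := by
  obtain ⟨N, hN, hfin⟩ := hE z hz
  have hfar : {i | (E i ∩ N).Nonempty ∧ z ∉ E i}.Finite := hfin.subset fun i hi => hi.1
  refine ⟨N ∩ ⋂ i ∈ {i | (E i ∩ N).Nonempty ∧ z ∉ E i}, (E i)ᶜ, inter_mem hN
    ((biInter_mem hfar).2 fun i hi => (hcl i).isOpen_compl.mem_nhds hi.2), ?_⟩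
  rintro i ⟨w, hwi, hwN, hw⟩
  by_contra hzi
  exact mem_iInter₂.1 hw i ⟨⟨w, hwi, hwN⟩, hzi⟩ hwi

lemma comp_injective {μ : Type*} (hE : LocallyFiniteOn E A) {φ : μ → κ}
    (hφ : Function.Injective φ) : LocallyFiniteOn (E ∘ φ) A := fun z hz =>
  let ⟨N, hN, hfin⟩ := hE z hz
  ⟨N, hN, hfin.preimage (f := φ) hφ.injOn⟩

lemma prod_univ {T : Type*} [TopologicalSpace T] (hE : LocallyFiniteOn E A) :
    LocallyFiniteOn (fun i => E i ×ˢ (univ : Set T)) (A ×ˢ univ) := by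
  rintro ⟨z, t⟩ hz
  obtain ⟨N, hN, hfin⟩ := hE z hz.1
  refine ⟨N ×ˢ univ, prod_mem_nhds hN univ_mem, hfin.subset ?_⟩
  rintro i ⟨p, hpE, hpN⟩
  exact ⟨p.1, hpE.1, hpN.1⟩

lemma continuousOn_iUnion (hE : LocallyFiniteOn E (⋃ i, E i)) (hcl : ∀ i, IsClosed (E i))
    {g : Z → X} (hg : ∀ i, ContinuousOn g (E i)) : ContinuousOn g (⋃ i, E i) := by
  intro z hz
  obtain ⟨N, hN, hfin⟩ := hE z hz
  let s := {i | (E i ∩ N).Nonempty}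
  have : Finite s := hfin
  have hs : ContinuousOn g (⋃ i : s, E i) :=
    (locallyFinite_of_finite fun i : s => E i).continuousOn_iUnion (fun i => hcl i) fun i => hg i
  have hsub : N ∩ ⋃ i, E i ⊆ ⋃ i : s, E i := by
    rintro w ⟨hwN, hw⟩
    obtain ⟨i, hi⟩ := mem_iUnion.1 hw
    exact mem_iUnion.2 ⟨⟨i, w, hi, hwN⟩, hi⟩
  have hzs : z ∈ ⋃ i : s, E i := hsub ⟨mem_of_mem_nhds hN, hz⟩
  exact (hs z hzs).mono_of_mem_nhdsWithin
    (mem_of_superset (inter_mem (mem_nhdsWithin_of_mem_nhds hN) self_mem_nhdsWithin) hsub)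

end LocallyFiniteOn

lemma continuousOn_homotopyConcat {h k : Z × I → X} {A : Set Z}
    (hh : ContinuousOn h (A ×ˢ univ)) (hk : ContinuousOn k (A ×ˢ univ))
    (hhk : ∀ z ∈ A, h (z, 1) = k (z, 0)) : ContinuousOn (homotopyConcat h k) (A ×ˢ univ) := by
  have hfirst : ContinuousOn (fun p : Z × I => h (p.1, projIcc 0 1 zero_le_one (2 * (p.2 : ℝ))))
      (A ×ˢ univ) :=
    hh.comp (Continuous.continuousOn (by fun_prop)) fun p hp => ⟨hp.1, mem_univ _⟩
  have hsecond : ContinuousOn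
      (fun p : Z × I => k (p.1, projIcc 0 1 zero_le_one (2 * (p.2 : ℝ) - 1))) (A ×ˢ univ) :=
    hk.comp (Continuous.continuousOn (by fun_prop)) fun p hp => ⟨hp.1, mem_univ _⟩
  refine ContinuousOn.if ?_ (hfirst.mono inter_subset_left) (hsecond.mono inter_subset_left)
  rintro p ⟨hpA, hp⟩
  have hhalf : (p.2 : ℝ) = 1 / 2 :=
    frontier_le_subset_eq (continuous_subtype_val.comp continuous_snd) continuous_const hp
  norm_num [hhalf, hhk p.1 hpA.1]

/-- `h` is a homotopy on `A` that starts at `F` and clusters at `x` along the family `E`: every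
neighborhood of `x` contains the tracks of the points of `E β ∩ A` for all but finitely many `β`.
Away from `A` only the initial condition is imposed. -/
structure IsClusteringHomotopyOn (E : κ → Set Z) (A : Set Z) (x : X) (F : Z → X)
    (h : Z × I → X) : Prop where
  zero : ∀ z, h (z, 0) = F z
  continuousOn : ContinuousOn h (A ×ˢ univ)
  eventually_mapsTo : ∀ W ∈ 𝓝 x, ∀ᶠ β in cofinite, MapsTo h ((E β ∩ A) ×ˢ univ) W

namespace IsClusteringHomotopyOn

variable {E : κ → Set Z} {A : Set Z} {x : X} {F : Z → X} {h : Z × I → X}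

lemma of_eqOn_const {l : Z → X} (hl : ∀ z ∈ A, l z = x) :
    IsClusteringHomotopyOn E A x l (l ∘ Prod.fst) where
  zero _ := rfl
  continuousOn := continuousOn_const.congr fun p hp => hl p.1 hp.1
  eventually_mapsTo W hW := .of_forall fun β p hp => by
    rw [Function.comp_apply, hl p.1 hp.1.2]
    exact mem_of_mem_nhds hW

lemma concat {k : Z × I → X} (hh : IsClusteringHomotopyOn E A x F h)
    (hk : IsClusteringHomotopyOn E A x (fun z => h (z, 1)) k) :
    IsClusteringHomotopyOn E A x F (homotopyConcat h k) where
  zero z := (homotopyConcat_zero h k z).trans (hh.zero z)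
  continuousOn := continuousOn_homotopyConcat hh.continuousOn hk.continuousOn
    fun z _ => (hk.zero z).symm
  eventually_mapsTo W hW := by
    filter_upwards [hh.eventually_mapsTo W hW, hk.eventually_mapsTo W hW] with β hhβ hkβ
    exact mapsTo_homotopyConcat hhβ hkβ

lemma comp_injective {μ : Type*} (hh : IsClusteringHomotopyOn E A x F h) {φ : μ → κ}
    (hφ : Function.Injective φ) : IsClusteringHomotopyOn (E ∘ φ) A x F h where
  zero := hh.zero
  continuousOn := hh.continuousOn
  eventually_mapsTo W hW := hφ.tendsto_cofinite.eventually (hh.eventually_mapsTo W hW)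

lemma tendsto_of_notMem (hh : IsClusteringHomotopyOn E A x F h) (hE : ∀ β, IsClosed (E β))
    (hA : A ⊆ ⋃ β, E β) {z : Z} (hz : z ∉ ⋃ β, E β) (t : I) :
    Tendsto h (𝓝[A ×ˢ univ] (z, t)) (𝓝 x) := by
  intro W hW
  have hfin := hh.eventually_mapsTo W hW
  rw [eventually_cofinite] at hfin
  have hclosed : IsClosed (⋃ β ∈ {β | ¬ MapsTo h ((E β ∩ A) ×ˢ univ) W}, E β) :=
    hfin.isClosed_biUnion fun β _ => hE β
  have hfar : ∀ᶠ p : Z × I in 𝓝[A ×ˢ univ] (z, t),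
      p.1 ∉ ⋃ β ∈ {β | ¬ MapsTo h ((E β ∩ A) ×ˢ univ) W}, E β :=
    (continuous_fst.continuousAt.eventually (hclosed.isOpen_compl.mem_nhds
      fun hmem => hz (iUnion₂_subset_iUnion _ _ hmem))).filter_mono nhdsWithin_le_nhds
  rw [Filter.mem_map]
  filter_upwards [hfar, self_mem_nhdsWithin] with p hp hpA
  obtain ⟨β, hβ⟩ := mem_iUnion.1 (hA hpA.1)
  by_contra hpW
  exact hp (mem_biUnion (x := β) (fun hall => hpW (hall ⟨⟨hβ, hpA.1⟩, mem_univ _⟩)) hβ)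

open Classical in
lemma continuous_ite_preimage {Y : Type*} [TopologicalSpace Y]
    (hh : IsClusteringHomotopyOn E (⋃ β, E β) x F h) (hE : ∀ β, IsClosed (E β)) {e : Y → Z}
    (he : Continuous e) (hopen : IsOpen (e ⁻¹' ⋃ β, E β)) {f : Y → X} (hf : Continuous f)
    (hfx : ∀ y ∈ frontier (e ⁻¹' ⋃ β, E β), f y = x) :
    Continuous fun p : Y × I => if e p.1 ∈ ⋃ β, E β then h (e p.1, p.2) else f p.1 := by
  have hprod : Continuous fun p : Y × I => (e p.1, p.2) := by fun_prop
  have hfrontier : ∀ p ∈ frontier {p : Y × I | e p.1 ∈ ⋃ β, E β},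
      e p.1 ∉ ⋃ β, E β ∧ f p.1 = x := by
    intro p hp
    have hp1 : p.1 ∈ frontier (e ⁻¹' ⋃ β, E β) := by
      rw [← mem_preimage, isOpenMap_fst.preimage_frontier_eq_frontier_preimage continuous_fst]
      exact hp
    exact ⟨(hopen.frontier_eq ▸ hp1).2, hfx _ hp1⟩
  refine continuous_if' (fun p hp => ?_) (fun p hp => ?_)
    (hh.continuousOn.comp hprod.continuousOn fun p hp => ⟨hp, mem_univ _⟩)
    (hf.comp continuous_fst).continuousOn
  · obtain ⟨hpE, hpx⟩ := hfrontier p hp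
    rw [if_neg hpE, hpx]
    exact (hh.tendsto_of_notMem hE subset_rfl hpE p.2).comp
      (hprod.continuousWithinAt.tendsto_nhdsWithin fun q hq => ⟨hq, mem_univ _⟩)
  · rw [if_neg (hfrontier p hp).1]
    exact (hf.comp continuous_fst).continuousWithinAt

end IsClusteringHomotopyOn

end General

/-! ### Boxes -/

section Box

variable {ι : Type*} {a b y : ι → ℝ}

/-- The relative interior of the box `Icc a b`, which may be degenerate in some directions. -/
def boxInterior (a b : ι → ℝ) : Set (ι → ℝ) :=
  {y ∈ Icc a b | ∀ i, a i < b i → y i ∈ Ioo (a i) (b i)}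

/-- The relative boundary of the box `Icc a b`. -/
def boxBoundary (a b : ι → ℝ) : Set (ι → ℝ) :=
  Icc a b \ boxInterior a b

/-- The dimension of the box `Icc a b`. -/
noncomputable def boxDim (a b : ι → ℝ) : ℕ :=
  {i | a i < b i}.ncard

lemma boxBoundary_subset : boxBoundary a b ⊆ Icc a b := sdiff_subset

lemma mem_boxBoundary_iff :
    y ∈ boxBoundary a b ↔ y ∈ Icc a b ∧ ∃ i, a i < b i ∧ (y i = a i ∨ y i = b i) := by
  refine and_congr_right fun hy => ?_
  rw [boxInterior, mem_sep_iff, not_and, not_forall]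
  refine ⟨fun h => ?_, fun ⟨i, hi, h⟩ => fun _ => ⟨i, fun hI => ?_⟩⟩
  · obtain ⟨i, hi⟩ := h hy
    rw [Classical.not_imp] at hi
    refine ⟨i, hi.1, ?_⟩
    by_contra! hne
    exact hi.2 ⟨(hy.1 i).lt_of_ne' hne.1, (hy.2 i).lt_of_ne hne.2⟩
  · rcases h with h | h
    exacts [(hI hi).1.ne' h, (hI hi).2.ne h]

lemma apply_eq_of_mem_Icc {i : ι} (hy : y ∈ Icc a b) (hi : ¬ a i < b i) : y i = a i :=
  le_antisymm ((hy.2 i).trans (not_lt.1 hi)) (hy.1 i)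

lemma abs_two_mul_sub_div_le_one_iff {α β s : ℝ} (h : α < β) :
    |(2 * s - α - β) / (β - α)| ≤ 1 ↔ s ∈ Icc α β := by
  rw [abs_div, abs_of_pos (sub_pos.2 h), div_le_one (sub_pos.2 h), abs_le, mem_Icc]
  constructor <;> rintro ⟨h₁, h₂⟩ <;> constructor <;> linarith

lemma abs_two_mul_sub_div_lt_one_iff {α β s : ℝ} (h : α < β) :
    |(2 * s - α - β) / (β - α)| < 1 ↔ s ∈ Ioo α β := by
  rw [abs_div, abs_of_pos (sub_pos.2 h), div_lt_one (sub_pos.2 h), abs_lt, mem_Ioo]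
  constructor <;> rintro ⟨h₁, h₂⟩ <;> constructor <;> linarith

lemma homothety_midpoint_apply (r : ℝ) (i : ι) :
    AffineMap.homothety (midpoint ℝ a b) r y i =
      (a i + b i) / 2 + r * (y i - (a i + b i) / 2) := by
  simp [AffineMap.homothety_apply, midpoint_eq_smul_add]
  ring

variable [Fintype ι]

/-- The gauge of the box `Icc a b` with respect to its midpoint. Degenerate directions contribute
`0`, by division by zero. -/
noncomputable def boxGauge (a b y : ι → ℝ) : ℝ :=
  ‖fun i => (2 * y i - a i - b i) / (b i - a i)‖

lemma continuous_boxGauge : Continuous (boxGauge a b) := by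
  unfold boxGauge
  fun_prop

lemma boxGauge_le_one_iff (hab : a ≤ b) :
    boxGauge a b y ≤ 1 ↔ ∀ i, a i < b i → y i ∈ Icc (a i) (b i) := by
  rw [boxGauge, pi_norm_le_iff_of_nonneg zero_le_one]
  refine forall_congr' fun i => ?_
  rcases (hab i).eq_or_lt with h | h
  · simp [h]
  · rw [Real.norm_eq_abs, abs_two_mul_sub_div_le_one_iff h, imp_iff_right h]

lemma boxGauge_lt_one_iff (hab : a ≤ b) :
    boxGauge a b y < 1 ↔ ∀ i, a i < b i → y i ∈ Ioo (a i) (b i) := by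
  rw [boxGauge, pi_norm_lt_iff zero_lt_one]
  refine forall_congr' fun i => ?_
  rcases (hab i).eq_or_lt with h | h
  · simp [h]
  · rw [Real.norm_eq_abs, abs_two_mul_sub_div_lt_one_iff h, imp_iff_right h]

lemma boxGauge_le_one (hy : y ∈ Icc a b) : boxGauge a b y ≤ 1 :=
  (boxGauge_le_one_iff (hy.1.trans hy.2)).2 fun i _ => ⟨hy.1 i, hy.2 i⟩

lemma mem_boxBoundary_iff_boxGauge :
    y ∈ boxBoundary a b ↔ y ∈ Icc a b ∧ boxGauge a b y = 1 := by
  refine and_congr_right fun hy => ?_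
  rw [boxInterior, mem_sep_iff, ← boxGauge_lt_one_iff (hy.1.trans hy.2), and_iff_right hy, not_lt,
    (boxGauge_le_one hy).ge_iff_eq]

lemma boxGauge_homothety {r : ℝ} (hr : 0 ≤ r) :
    boxGauge a b (AffineMap.homothety (midpoint ℝ a b) r y) = r * boxGauge a b y := by
  rw [boxGauge, boxGauge, ← abs_of_nonneg hr, ← Real.norm_eq_abs, ← norm_smul,
    Real.norm_eq_abs, abs_of_nonneg hr]
  congr 1 with i
  rw [homothety_midpoint_apply, Pi.smul_apply, smul_eq_mul]
  ring

lemma homothety_mem_Icc {r : ℝ} (hy : y ∈ Icc a b) (hr : 0 ≤ r) (hry : r * boxGauge a b y ≤ 1) :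
    AffineMap.homothety (midpoint ℝ a b) r y ∈ Icc a b := by
  have hmem : ∀ i, AffineMap.homothety (midpoint ℝ a b) r y i ∈ Icc (a i) (b i) := by
    intro i
    by_cases hi : a i < b i
    · rw [← boxGauge_homothety hr, boxGauge_le_one_iff (hy.1.trans hy.2)] at hry
      exact hry i hi
    · have hb : b i = a i := apply_eq_of_mem_Icc (right_mem_Icc.2 (hy.1.trans hy.2)) hi
      simp [homothety_midpoint_apply, apply_eq_of_mem_Icc hy hi, hb]
  exact ⟨fun i => (hmem i).1, fun i => (hmem i).2⟩

/-- The retraction of `Icc a b ×ˢ univ` onto the union of its bottom `Icc a b ×ˢ {0}` and its side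
`boxBoundary a b ×ˢ univ`, which expands from the midpoint of the box as time goes by. -/
noncomputable def boxRetraction (a b : ι → ℝ) (p : (ι → ℝ) × I) : (ι → ℝ) × I :=
  (AffineMap.homothety (midpoint ℝ a b) ((1 + p.2) / max 1 ((1 + p.2) * boxGauge a b p.1)) p.1,
    projIcc 0 1 zero_le_one ((1 + p.2) * boxGauge a b p.1 - 1))

lemma continuous_one_add_mul_boxGauge :
    Continuous fun p : (ι → ℝ) × I => (1 + (p.2 : ℝ)) * boxGauge a b p.1 :=
  (by fun_prop : Continuous fun p : (ι → ℝ) × I => 1 + (p.2 : ℝ)).mul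
    (continuous_boxGauge.comp continuous_fst)

lemma continuous_boxRetraction : Continuous (boxRetraction a b) := by
  have hratio : Continuous fun p : (ι → ℝ) × I =>
      (1 + (p.2 : ℝ)) / max 1 ((1 + p.2) * boxGauge a b p.1) :=
    Continuous.div (by fun_prop) (continuous_const.max continuous_one_add_mul_boxGauge) fun p =>
      (zero_lt_one.trans_le (le_max_left _ _)).ne'
  refine .prodMk (continuous_pi fun i => ?_)
    (continuous_projIcc.comp (continuous_one_add_mul_boxGauge.sub continuous_const))
  simp only [homothety_midpoint_apply]
  fun_prop

lemma boxRetraction_of_mul_le {t : I} (h : (1 + t) * boxGauge a b y ≤ 1) :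
    boxRetraction a b (y, t) = (AffineMap.homothety (midpoint ℝ a b) (1 + (t : ℝ)) y, 0) := by
  rw [boxRetraction, max_eq_left h, div_one, projIcc_of_le_left _ (sub_nonpos.2 h)]
  rfl

lemma boxRetraction_zero (hy : y ∈ Icc a b) : boxRetraction a b (y, 0) = (y, 0) := by
  rw [boxRetraction_of_mul_le (by simpa using boxGauge_le_one hy)]
  simp

lemma boxRetraction_of_mem_boxBoundary (hy : y ∈ boxBoundary a b) (t : I) :
    boxRetraction a b (y, t) = (y, t) := by
  have ht : (0 : ℝ) < 1 + t := by linarith [t.2.1]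
  simp [boxRetraction, (mem_boxBoundary_iff_boxGauge.1 hy).2, t.2.1, div_self ht.ne']

lemma boxRetraction_fst_mem_boxBoundary {t : I} (hy : y ∈ Icc a b)
    (h : 1 ≤ (1 + t) * boxGauge a b y) : (boxRetraction a b (y, t)).1 ∈ boxBoundary a b := by
  have ht : (0 : ℝ) < 1 + t := by linarith [t.2.1]
  have hr : 0 ≤ (1 + t) / ((1 + t) * boxGauge a b y) := by positivity
  have hone : (1 + t) / ((1 + t) * boxGauge a b y) * boxGauge a b y = 1 := by
    rw [div_mul_eq_mul_div, div_self (by linarith)]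
  rw [boxRetraction, max_eq_right h, mem_boxBoundary_iff_boxGauge, boxGauge_homothety hr]
  exact ⟨homothety_mem_Icc hy hr hone.le, hone⟩

variable {X : Type*} {F : (ι → ℝ) → X} {h : (ι → ℝ) × I → X}

lemma mapsTo_comp_boxRetraction (h0 : ∀ y, h (y, 0) = F y) {W : Set X}
    (hF : MapsTo F (Icc a b) W) (hW : MapsTo h (boxBoundary a b ×ˢ univ) W) :
    MapsTo (h ∘ boxRetraction a b) (Icc a b ×ˢ univ) W := by
  rintro ⟨y, t⟩ ⟨hy, -⟩
  rcases le_total ((1 + t) * boxGauge a b y) 1 with hle | hge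
  · rw [Function.comp_apply, boxRetraction_of_mul_le hle, h0]
    exact hF (homothety_mem_Icc hy (by linarith [t.2.1]) hle)
  · exact hW ⟨boxRetraction_fst_mem_boxBoundary hy hge, mem_univ _⟩

lemma continuousOn_comp_boxRetraction [TopologicalSpace X] (hF : Continuous F)
    (h0 : ∀ y, h (y, 0) = F y) (hh : ContinuousOn h (boxBoundary a b ×ˢ univ)) :
    ContinuousOn (h ∘ boxRetraction a b) (Icc a b ×ˢ univ) := by
  have hclosed : IsClosed (Icc a b ×ˢ (univ : Set I)) := isClosed_Icc.prod isClosed_univ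
  have hbottom : ContinuousOn (h ∘ boxRetraction a b)
      {p | (1 + (p.2 : ℝ)) * boxGauge a b p.1 ≤ 1} := by
    have hFst : Continuous fun p => F (boxRetraction a b p).1 :=
      hF.comp (continuous_fst.comp continuous_boxRetraction)
    refine hFst.continuousOn.congr ?_
    rintro ⟨y, t⟩ hp
    simp only [Function.comp_apply, boxRetraction_of_mul_le hp, h0]
  have hside : ContinuousOn (h ∘ boxRetraction a b)
      ({p | 1 ≤ (1 + (p.2 : ℝ)) * boxGauge a b p.1} ∩ Icc a b ×ˢ univ) :=
    hh.comp continuous_boxRetraction.continuousOn fun p hp =>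
      ⟨boxRetraction_fst_mem_boxBoundary hp.2.1 hp.1, mem_univ _⟩
  refine ((hbottom.mono inter_subset_left).union_of_isClosed hside
    ((isClosed_le continuous_one_add_mul_boxGauge continuous_const).inter hclosed)
    ((isClosed_le continuous_const continuous_one_add_mul_boxGauge).inter hclosed)).mono
    fun p hp => ?_
  rcases le_total ((1 + (p.2 : ℝ)) * boxGauge a b p.1) 1 with hle | hge
  exacts [Or.inl ⟨hle, hp⟩, Or.inr ⟨hge, hp⟩]

end Box

section Chart

variable {ι τ : Type*} {a b y : ι → ℝ} (e : {i // a i < b i} ≃ τ)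

open Classical in
/-- The affine parametrization of the box `Icc a b` by the unit cube, with one coordinate for each
nondegenerate direction of the box. -/
noncomputable def boxParam (u : τ → I) (i : ι) : ℝ :=
  if hi : a i < b i then a i + u (e ⟨i, hi⟩) * (b i - a i) else a i

/-- The left inverse of `boxParam` on the box `Icc a b`, clamped outside of it. -/
noncomputable def boxChart (y : ι → ℝ) (l : τ) : I :=
  projIcc 0 1 zero_le_one
    ((y (e.symm l) - a (e.symm l)) / (b (e.symm l) - a (e.symm l)))

lemma continuous_boxParam : Continuous (boxParam e) := by
  refine continuous_pi fun i => ?_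
  unfold boxParam
  split_ifs <;> fun_prop

lemma continuous_boxChart : Continuous (boxChart e) :=
  continuous_pi fun l => continuous_projIcc.comp (by fun_prop)

lemma boxParam_mem_Icc (hab : a ≤ b) (u : τ → I) : boxParam e u ∈ Icc a b := by
  have hmem : ∀ i, boxParam e u i ∈ Icc (a i) (b i) := by
    intro i
    unfold boxParam
    split_ifs with hi
    · have hu := (u (e ⟨i, hi⟩)).2
      constructor <;> nlinarith [hu.1, hu.2]
    · exact left_mem_Icc.2 (hab i)
  exact ⟨fun i => (hmem i).1, fun i => (hmem i).2⟩

lemma coe_boxChart (hy : y ∈ Icc a b) (l : τ) :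
    (boxChart e y l : ℝ) = (y (e.symm l) - a (e.symm l)) / (b (e.symm l) - a (e.symm l)) := by
  have hpos : 0 < b (e.symm l) - a (e.symm l) := sub_pos.2 (e.symm l).2
  rw [boxChart, projIcc_of_mem zero_le_one]
  exact ⟨div_nonneg (sub_nonneg.2 (hy.1 _)) hpos.le,
    (div_le_one hpos).2 (sub_le_sub_right (hy.2 _) _)⟩

lemma boxParam_boxChart (hy : y ∈ Icc a b) : boxParam e (boxChart e y) = y := by
  ext i
  unfold boxParam
  split_ifs with hi
  · rw [coe_boxChart e hy, Equiv.symm_apply_apply, div_mul_cancel₀ _ (sub_pos.2 hi).ne']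
    exact add_sub_cancel _ _
  · exact (apply_eq_of_mem_Icc hy hi).symm

lemma boxParam_mem_boxBoundary (hab : a ≤ b) {u : τ → I} (hu : u ∈ Cube.boundary τ) :
    boxParam e u ∈ boxBoundary a b := by
  obtain ⟨l, hl⟩ := hu
  refine mem_boxBoundary_iff.2 ⟨boxParam_mem_Icc e hab u, e.symm l, (e.symm l).2, ?_⟩
  rw [boxParam, dif_pos (e.symm l).2]
  rcases hl with hl | hl <;> simp [hl]

lemma boxChart_mem_boundary (hy : y ∈ boxBoundary a b) : boxChart e y ∈ Cube.boundary τ := by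
  obtain ⟨hyI, i, hi, h⟩ := mem_boxBoundary_iff.1 hy
  refine ⟨e ⟨i, hi⟩, h.imp (fun h => ?_) fun h => ?_⟩
  all_goals
    apply Subtype.ext
    rw [coe_boxChart e hyI, Equiv.symm_apply_apply, h]
  · exact (congrArg (· / _) (sub_self _)).trans (zero_div _)
  · exact div_self (sub_pos.2 hi).ne'

end Chart

namespace SeqNConnectedAt

variable {X : Type*} [TopologicalSpace X] {x : X} {j m : ℕ} {κ : Type*} [Countable κ]

lemma exists_nullhomotopies (hX : SeqNConnectedAt m X x) (hj : j ≤ m)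
    (f : κ → C((Fin j → I), X)) (hbd : ∀ k, ∀ y ∈ Cube.boundary (Fin j), f k y = x)
    (hf : ClustersAt f x) :
    ∃ H : κ → C((Fin j → I) × I, X),
      (∀ k y, H k (y, 0) = f k y) ∧ (∀ k y, H k (y, 1) = x) ∧
      (∀ k t, ∀ y ∈ Cube.boundary (Fin j), H k (y, t) = x) ∧ ClustersAt H x := by
  obtain ⟨e, he⟩ := exists_injective_nat κ
  have hcases : ∀ m, (∃ k, e k = m ∧ Function.extend e f (fun _ => .const _ x) m = f k) ∨
      Function.extend e f (fun _ => .const _ x) m = .const _ x := by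
    intro m
    by_cases hm : ∃ k, e k = m
    · obtain ⟨k, rfl⟩ := hm
      exact .inl ⟨k, rfl, he.extend_apply ..⟩
    · exact .inr (Function.extend_apply' _ _ _ hm)
  obtain ⟨H, h0, h1, hHbd, hH⟩ := hX j hj (Function.extend e f fun _ => .const _ x)
    (fun m y hy => by
      rcases hcases m with ⟨k, -, hk⟩ | hk <;> rw [hk]
      exacts [hbd k y hy, rfl])
    (fun W hW => ((hf W hW).image e).subset fun m hm => by
      rcases hcases m with ⟨k, rfl, hk⟩ | hk
      · exact ⟨k, fun hmaps => hm (hk ▸ hmaps), rfl⟩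
      · refine (hm ?_).elim
        rw [hk]
        exact range_subset_iff.2 fun _ => mem_of_mem_nhds hW)
  exact ⟨fun k => H (e k), fun k y => by rw [h0, he.extend_apply], fun k => h1 (e k),
    fun k => hHbd (e k), fun W hW => (hH W hW).preimage he.injOn⟩

lemma exists_box_nullhomotopies {ι : Type*} [Finite ι] (hX : SeqNConnectedAt m X x) (hj : j ≤ m)
    {a b : κ → ι → ℝ} (hab : ∀ k, a k ≤ b k) (hdim : ∀ k, boxDim (a k) (b k) = j)
    {l : (ι → ℝ) → X} (hl : ∀ k, ContinuousOn l (Icc (a k) (b k)))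
    (hbd : ∀ k, ∀ y ∈ boxBoundary (a k) (b k), l y = x)
    (hcl : ∀ W ∈ 𝓝 x, ∀ᶠ k in cofinite, MapsTo l (Icc (a k) (b k)) W) :
    ∃ N : κ → C((ι → ℝ) × I, X),
      (∀ k, ∀ y ∈ Icc (a k) (b k), N k (y, 0) = l y) ∧ (∀ k y, N k (y, 1) = x) ∧
      (∀ k t, ∀ y ∈ boxBoundary (a k) (b k), N k (y, t) = x) ∧
      ∀ W ∈ 𝓝 x, ∀ᶠ k in cofinite, ∀ p, N k p ∈ W := by
  let e : ∀ k, {i // a k i < b k i} ≃ Fin j := fun k => Finite.equivFinOfCardEq (hdim k)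
  obtain ⟨H, h0, h1, hHbd, hH⟩ := hX.exists_nullhomotopies hj
    (fun k => ⟨fun u => l (boxParam (e k) u),
      (hl k).comp_continuous (continuous_boxParam _) (boxParam_mem_Icc _ (hab k))⟩)
    (fun k y hy => hbd k _ (boxParam_mem_boxBoundary _ (hab k) hy))
    (fun W hW => (hcl W hW).subset fun k hk hmaps =>
      hk (range_subset_iff.2 fun u => hmaps (boxParam_mem_Icc _ (hab k) u)))
  refine ⟨fun k => (H k).comp ⟨fun p => (boxChart (e k) p.1, p.2),
    ((continuous_boxChart _).comp continuous_fst).prodMk continuous_snd⟩,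
    fun k y hy => (h0 k _).trans ?_, fun k y => h1 k _,
    fun k t y hy => hHbd k t _ (boxChart_mem_boundary _ hy), fun W hW => ?_⟩
  · exact congrArg l (boxParam_boxChart _ hy)
  · exact (hH W hW).subset fun k hk hrange => hk fun p => hrange ⟨_, rfl⟩

end SeqNConnectedAt

/-! ### Complexes of boxes -/

/-- A locally finite complex of boxes `Icc (a β) (b β)`, all of whose faces are boxes of the
complex: their relative interiors partition the union, and a box containing a relative interior
point of another one contains all of it. -/
structure IsBoxComplex {ι κ : Type*} (a b : κ → ι → ℝ) : Prop where
  le : ∀ β, a β ≤ b β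
  injective : Function.Injective fun β => Icc (a β) (b β)
  exists_mem_boxInterior : ∀ β, ∀ y ∈ Icc (a β) (b β), ∃ γ, y ∈ boxInterior (a γ) (b γ)
  Icc_subset_Icc : ∀ β γ, ∀ y ∈ boxInterior (a β) (b β), y ∈ Icc (a γ) (b γ) →
    Icc (a β) (b β) ⊆ Icc (a γ) (b γ)
  locallyFiniteOn : LocallyFiniteOn (fun β => Icc (a β) (b β)) (⋃ β, Icc (a β) (b β))

/-- The union of the boxes of dimension less than `j`. -/
def boxSkeleton {ι κ : Type*} (a b : κ → ι → ℝ) (j : ℕ) : Set (ι → ℝ) :=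
  ⋃ β : {β // boxDim (a β) (b β) < j}, Icc (a β) (b β)

section Skeleton

variable {ι κ : Type*} {a b : κ → ι → ℝ} {y : ι → ℝ} {j : ℕ} {β γ : κ}

lemma mem_boxSkeleton :
    y ∈ boxSkeleton a b j ↔ ∃ β, boxDim (a β) (b β) < j ∧ y ∈ Icc (a β) (b β) := by
  simp only [boxSkeleton, mem_iUnion, Subtype.exists, exists_prop]

lemma boxSkeleton_zero : boxSkeleton a b 0 = ∅ :=
  eq_empty_of_forall_notMem fun _ hy =>
    let ⟨_, hβ, _⟩ := mem_boxSkeleton.1 hy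
    Nat.not_lt_zero _ hβ

lemma boxSkeleton_card_add_one [Finite ι] :
    boxSkeleton a b (Nat.card ι + 1) = ⋃ β, Icc (a β) (b β) := by
  ext y
  simp only [mem_boxSkeleton, mem_iUnion, Nat.lt_succ_iff, boxDim, ncard_le_card, true_and]

namespace IsBoxComplex

lemma eventually_forall_face (hC : IsBoxComplex a b) {P : κ → Prop}
    (hP : ∀ᶠ β in cofinite, P β) :
    ∀ᶠ γ in cofinite, ∀ β, Icc (a β) (b β) ⊆ Icc (a γ) (b γ) → P β := by
  refine (hP.biUnion fun β _ => hC.locallyFiniteOn.finite_setOf_mem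
    (mem_iUnion.2 ⟨β, left_mem_Icc.2 (hC.le β)⟩)).subset fun γ hγ => ?_
  obtain ⟨β, hβγ, hβ⟩ : ∃ β, Icc (a β) (b β) ⊆ Icc (a γ) (b γ) ∧ ¬ P β := by
    simpa only [mem_compl_iff, mem_ofPred_eq, not_forall, exists_prop] using hγ
  exact mem_biUnion hβ (hβγ (left_mem_Icc.2 (hC.le β)))

lemma continuousOn_boxSkeleton_prod {X : Type*} [TopologicalSpace X] (hC : IsBoxComplex a b)
    {h : (ι → ℝ) × I → X}
    (hh : ∀ β, boxDim (a β) (b β) < j → ContinuousOn h (Icc (a β) (b β) ×ˢ univ)) :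
    ContinuousOn h (boxSkeleton a b j ×ˢ univ) := by
  have hloc := (hC.locallyFiniteOn.prod_univ (T := I)).comp_injective
    (Subtype.val_injective (p := fun β => boxDim (a β) (b β) < j))
  rw [boxSkeleton, iUnion_prod_const]
  refine LocallyFiniteOn.continuousOn_iUnion (fun p hp => hloc p ?_)
    (fun β => isClosed_Icc.prod isClosed_univ) fun β => hh β β.2
  obtain ⟨β, hβ⟩ := mem_iUnion.1 hp
  exact ⟨mem_iUnion.2 ⟨β, hβ.1⟩, mem_univ _⟩

variable [Finite ι]

lemma boxDim_lt (hC : IsBoxComplex a b) (hy : y ∈ boxInterior (a β) (b β))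
    (hyγ : y ∈ Icc (a γ) (b γ)) (hne : γ ≠ β) : boxDim (a β) (b β) < boxDim (a γ) (b γ) := by
  have hsub := hC.Icc_subset_Icc β γ y hy hyγ
  obtain ⟨ha, hb⟩ := (Icc_subset_Icc_iff (hC.le β)).1 hsub
  refine ncard_lt_ncard ⟨fun i hi => (ha i).trans_lt (hi.trans_le (hb i)), fun hdim => hne ?_⟩
  have hyγ' : y ∈ boxInterior (a γ) (b γ) :=
    ⟨hyγ, fun i hi => Ioo_subset_Ioo (ha i) (hb i) (hy.2 i (hdim hi))⟩
  exact hC.injective ((hC.Icc_subset_Icc γ β y hyγ' hy.1).antisymm hsub)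

lemma boxBoundary_subset_boxSkeleton (hC : IsBoxComplex a b) :
    boxBoundary (a β) (b β) ⊆ boxSkeleton a b (boxDim (a β) (b β)) := by
  rintro y ⟨hy, hyint⟩
  obtain ⟨γ, hγ⟩ := hC.exists_mem_boxInterior β y hy
  exact mem_boxSkeleton.2 ⟨γ, hC.boxDim_lt hγ hy fun h => hyint (h ▸ hγ), hγ.1⟩

lemma notMem_boxSkeleton (hC : IsBoxComplex a b) (hy : y ∈ boxInterior (a β) (b β)) :
    y ∉ boxSkeleton a b (boxDim (a β) (b β)) := by
  intro hmem
  obtain ⟨γ, hγ, hyγ⟩ := mem_boxSkeleton.1 hmem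
  exact hγ.not_gt (hC.boxDim_lt hy hyγ fun h => hγ.ne (h ▸ rfl))

lemma eq_of_boxDim_eq (hC : IsBoxComplex a b) (hβγ : boxDim (a γ) (b γ) = boxDim (a β) (b β))
    (hy : y ∈ boxInterior (a β) (b β)) (hyγ : y ∈ Icc (a γ) (b γ)) : γ = β := by
  by_contra hne
  exact (hC.boxDim_lt hy hyγ hne).ne' hβγ

end IsBoxComplex

end Skeleton

section Extension

variable {ι κ X : Type*} [Finite ι] {a b : κ → ι → ℝ} {j : ℕ} {h : (ι → ℝ) × I → X}

namespace IsBoxComplex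

open Classical in
lemma exists_eqOn_boxes (hC : IsBoxComplex a b) (G : κ → (ι → ℝ) × I → X)
    (hG : ∀ β, boxDim (a β) (b β) = j → EqOn (G β) h (boxBoundary (a β) (b β) ×ˢ univ))
    (hG0 : ∀ β, boxDim (a β) (b β) = j → ∀ y ∈ Icc (a β) (b β), G β (y, 0) = h (y, 0)) :
    ∃ h' : (ι → ℝ) × I → X, (∀ y, h' (y, 0) = h (y, 0)) ∧
      EqOn h' h (boxSkeleton a b j ×ˢ univ) ∧
      ∀ β, boxDim (a β) (b β) = j → EqOn h' (G β) (Icc (a β) (b β) ×ˢ univ) := by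
  let h' : (ι → ℝ) × I → X := fun p =>
    if hβ : ∃ β, boxDim (a β) (b β) = j ∧ p.1 ∈ boxInterior (a β) (b β) then G hβ.choose p else h p
  have hskel : EqOn h' h (boxSkeleton a b j ×ˢ univ) := fun p hp =>
    dif_neg fun ⟨β, hβ, hpβ⟩ => hC.notMem_boxSkeleton hpβ (hβ ▸ hp.1)
  have hbox : ∀ β, boxDim (a β) (b β) = j → EqOn h' (G β) (Icc (a β) (b β) ×ˢ univ) := by
    intro β hβ p hp
    by_cases hpβ : p.1 ∈ boxInterior (a β) (b β)
    · have hex : ∃ β, boxDim (a β) (b β) = j ∧ p.1 ∈ boxInterior (a β) (b β) := ⟨β, hβ, hpβ⟩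
      have hchoose : hex.choose = β :=
        hC.eq_of_boxDim_eq (hex.choose_spec.1.trans hβ.symm) hpβ hex.choose_spec.2.1
      simp only [h', dif_pos hex, hchoose]
    · rw [hG β hβ ⟨⟨hp.1, hpβ⟩, hp.2⟩]
      exact hskel ⟨hβ ▸ hC.boxBoundary_subset_boxSkeleton ⟨hp.1, hpβ⟩, hp.2⟩
  refine ⟨h', fun y => ?_, hskel, hbox⟩
  by_cases hy : ∃ β, boxDim (a β) (b β) = j ∧ y ∈ boxInterior (a β) (b β)
  · obtain ⟨β, hβ, hyβ⟩ := hy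
    rw [hbox β hβ ⟨hyβ.1, mem_univ _⟩, hG0 β hβ y hyβ.1]
  · exact dif_neg hy

lemma exists_extension [TopologicalSpace X] {x : X} {F : (ι → ℝ) → X} (hC : IsBoxComplex a b)
    (hh : IsClusteringHomotopyOn (fun β => Icc (a β) (b β)) (boxSkeleton a b j) x F h)
    (G : κ → (ι → ℝ) × I → X)
    (hG : ∀ β, boxDim (a β) (b β) = j → EqOn (G β) h (boxBoundary (a β) (b β) ×ˢ univ))
    (hG0 : ∀ β, boxDim (a β) (b β) = j → ∀ y ∈ Icc (a β) (b β), G β (y, 0) = h (y, 0))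
    (hGcont : ∀ β, boxDim (a β) (b β) = j → ContinuousOn (G β) (Icc (a β) (b β) ×ˢ univ))
    (hGcl : ∀ W ∈ 𝓝 x, ∀ᶠ β in cofinite, boxDim (a β) (b β) = j →
      MapsTo (G β) (Icc (a β) (b β) ×ˢ univ) W) :
    ∃ h', IsClusteringHomotopyOn (fun β => Icc (a β) (b β)) (boxSkeleton a b (j + 1)) x F h' ∧
      EqOn h' h (boxSkeleton a b j ×ˢ univ) ∧
      ∀ β, boxDim (a β) (b β) = j → EqOn h' (G β) (Icc (a β) (b β) ×ˢ univ) := by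
  obtain ⟨h', h'0, hskel, hbox⟩ := hC.exists_eqOn_boxes G hG hG0
  refine ⟨h', ⟨fun z => (h'0 z).trans (hh.zero z), ?_, fun W hW => ?_⟩, hskel, hbox⟩
  · refine hC.continuousOn_boxSkeleton_prod fun β hβ => ?_
    rcases Nat.lt_succ_iff_lt_or_eq.1 hβ with hβ | hβ
    · have hsub : Icc (a β) (b β) ×ˢ (univ : Set I) ⊆ boxSkeleton a b j ×ˢ univ :=
        prod_mono_left fun y hy => mem_boxSkeleton.2 ⟨β, hβ, hy⟩
      exact (hh.continuousOn.mono hsub).congr (hskel.mono hsub)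
    · exact (hGcont β hβ).congr (hbox β hβ)
  · filter_upwards [hh.eventually_mapsTo W hW, hC.eventually_forall_face (hGcl W hW)]
      with γ hhγ hGγ p hp
    obtain ⟨β, hβ, hpβ⟩ := mem_boxSkeleton.1 hp.1.2
    by_cases hpj : p.1 ∈ boxSkeleton a b j
    · rw [hskel ⟨hpj, hp.2⟩]
      exact hhγ ⟨⟨hp.1.1, hpj⟩, hp.2⟩
    · have hβj : boxDim (a β) (b β) = j :=
        (Nat.lt_succ_iff_lt_or_eq.1 hβ).resolve_left fun hlt =>
          hpj (mem_boxSkeleton.2 ⟨β, hlt, hpβ⟩)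
      have hint : p.1 ∈ boxInterior (a β) (b β) := by
        by_contra hbd
        exact hpj (hβj ▸ hC.boxBoundary_subset_boxSkeleton ⟨hpβ, hbd⟩)
      rw [hbox β hβj ⟨hpβ, hp.2⟩]
      exact hGγ β (hC.Icc_subset_Icc β γ _ hint hp.1.1) hβj ⟨hpβ, hp.2⟩

end IsBoxComplex

end Extension

section Induction

variable {ι κ X : Type*} [TopologicalSpace X] {a b : κ → ι → ℝ} {x : X} {j m : ℕ}
  {F : (ι → ℝ) → X} {h : (ι → ℝ) × I → X}

namespace IsBoxComplex

lemma exists_extension_comp_boxRetraction [Fintype ι] (hC : IsBoxComplex a b) (hF : Continuous F)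
    (hFcl : ∀ W ∈ 𝓝 x, ∀ᶠ β in cofinite, MapsTo F (Icc (a β) (b β)) W)
    (hh : IsClusteringHomotopyOn (fun β => Icc (a β) (b β)) (boxSkeleton a b j) x F h) :
    ∃ h', IsClusteringHomotopyOn (fun β => Icc (a β) (b β)) (boxSkeleton a b (j + 1)) x F h' ∧
      EqOn h' h (boxSkeleton a b j ×ˢ univ) ∧
      ∀ β, boxDim (a β) (b β) = j →
        EqOn h' (h ∘ boxRetraction (a β) (b β)) (Icc (a β) (b β) ×ˢ univ) := by
  have hbd : ∀ β, boxDim (a β) (b β) = j → boxBoundary (a β) (b β) ⊆ boxSkeleton a b j := by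
    rintro β rfl
    exact hC.boxBoundary_subset_boxSkeleton
  refine hC.exists_extension hh (fun β => h ∘ boxRetraction (a β) (b β))
    (fun β _ p hp => congrArg h (boxRetraction_of_mem_boxBoundary hp.1 p.2))
    (fun β _ y hy => congrArg h (boxRetraction_zero hy))
    (fun β hβ => continuousOn_comp_boxRetraction hF hh.zero
      (hh.continuousOn.mono (prod_mono_left (hbd β hβ)))) fun W hW => ?_
  filter_upwards [hFcl W hW, hh.eventually_mapsTo W hW] with β hFβ hhβ hβ
  exact mapsTo_comp_boxRetraction hh.zero hFβ fun p hp =>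
    hhβ ⟨⟨boxBoundary_subset hp.1, hbd β hβ hp.1⟩, hp.2⟩

open Classical in
lemma exists_nullhomotopy_of_eqOn_const [Finite ι] [Countable κ] (hC : IsBoxComplex a b)
    (hX : SeqNConnectedAt m X x) (hj : j ≤ m) {l : (ι → ℝ) → X}
    (hl : ContinuousOn l (boxSkeleton a b (j + 1)))
    (hlx : ∀ y ∈ boxSkeleton a b j, l y = x)
    (hlcl : ∀ W ∈ 𝓝 x, ∀ᶠ β in cofinite,
      MapsTo l (Icc (a β) (b β) ∩ boxSkeleton a b (j + 1)) W) :
    ∃ k, IsClusteringHomotopyOn (fun β => Icc (a β) (b β)) (boxSkeleton a b (j + 1)) x l k ∧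
      ∀ y ∈ boxSkeleton a b (j + 1), k (y, 1) = x := by
  let κj := {β // boxDim (a β) (b β) = j}
  have hbd : ∀ β : κj, ∀ y ∈ boxBoundary (a β) (b β), y ∈ boxSkeleton a b j := by
    rintro ⟨β, rfl⟩
    exact hC.boxBoundary_subset_boxSkeleton
  have hcell : ∀ β : κj, Icc (a β) (b β) ⊆ boxSkeleton a b (j + 1) := fun β y hy =>
    mem_boxSkeleton.2 ⟨β, Nat.lt_succ_iff.2 β.2.le, hy⟩
  obtain ⟨N, hN0, hN1, hNbd, hNcl⟩ := hX.exists_box_nullhomotopies hj (κ := κj)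
    (fun β => hC.le β) (fun β => β.2) (fun β => hl.mono (hcell β))
    (fun β y hy => hlx y (hbd β y hy)) fun W hW =>
      (Subtype.val_injective.tendsto_cofinite.eventually (hlcl W hW)).mono
        fun β hβ y hy => hβ ⟨hy, hcell β hy⟩
  let G : κ → (ι → ℝ) × I → X := fun β p =>
    if hβ : boxDim (a β) (b β) = j then N ⟨β, hβ⟩ p else x
  have hGN : ∀ β : κj, G β = N β := fun β => funext fun p => dif_pos β.2
  obtain ⟨k, hk, hkskel, hkbox⟩ := hC.exists_extension (.of_eqOn_const hlx) G
    (fun β hβ p hp => by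
      rw [hGN ⟨β, hβ⟩, Function.comp_apply, hNbd ⟨β, hβ⟩ p.2 p.1 hp.1, hlx _ (hbd ⟨β, hβ⟩ _ hp.1)])
    (fun β hβ y hy => (congrFun (hGN ⟨β, hβ⟩) _).trans (hN0 ⟨β, hβ⟩ y hy))
    (fun β hβ => hGN ⟨β, hβ⟩ ▸ (N ⟨β, hβ⟩).continuous.continuousOn)
    (fun W hW => ((hNcl W hW).image Subtype.val).subset fun β hβ => by
      rw [mem_compl_iff, mem_ofPred_eq, Classical.not_imp] at hβ
      exact ⟨⟨β, hβ.1⟩, fun hall => hβ.2 fun p _ => hGN ⟨β, hβ.1⟩ ▸ hall p, rfl⟩)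
  refine ⟨k, hk, fun y hy => ?_⟩
  obtain ⟨β, hβ, hyβ⟩ := mem_boxSkeleton.1 hy
  rcases Nat.lt_succ_iff_lt_or_eq.1 hβ with hβ | hβ
  · have hyj : y ∈ boxSkeleton a b j := mem_boxSkeleton.2 ⟨β, hβ, hyβ⟩
    exact (hkskel ⟨hyj, mem_univ _⟩).trans (hlx y hyj)
  · rw [hkbox β hβ ⟨hyβ, mem_univ _⟩, hGN ⟨β, hβ⟩, hN1]

lemma exists_nullhomotopy_succ [Finite ι] [Countable κ] (hC : IsBoxComplex a b)
    (hX : SeqNConnectedAt m X x) (hj : j ≤ m) (hF : Continuous F)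
    (hFcl : ∀ W ∈ 𝓝 x, ∀ᶠ β in cofinite, MapsTo F (Icc (a β) (b β)) W)
    (hh : IsClusteringHomotopyOn (fun β => Icc (a β) (b β)) (boxSkeleton a b j) x F h)
    (h1 : ∀ y ∈ boxSkeleton a b j, h (y, 1) = x) :
    ∃ h', IsClusteringHomotopyOn (fun β => Icc (a β) (b β)) (boxSkeleton a b (j + 1)) x F h' ∧
      ∀ y ∈ boxSkeleton a b (j + 1), h' (y, 1) = x := by
  have := Fintype.ofFinite ι
  obtain ⟨h', hh', heq, -⟩ := hC.exists_extension_comp_boxRetraction hF hFcl hh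
  obtain ⟨k, hk, hk1⟩ := hC.exists_nullhomotopy_of_eqOn_const hX hj (l := fun y => h' (y, 1))
    (hh'.continuousOn.comp (by fun_prop) fun y hy => ⟨hy, mem_univ _⟩)
    (fun y hy => (heq ⟨hy, mem_univ _⟩).trans (h1 y hy))
    fun W hW => (hh'.eventually_mapsTo W hW).mono fun β hβ y hy => hβ ⟨hy, mem_univ _⟩
  exact ⟨homotopyConcat h' k, hh'.concat hk, fun y hy =>
    (homotopyConcat_one h' k y).trans (hk1 y hy)⟩

lemma exists_nullhomotopy [Finite ι] [Countable κ] (hC : IsBoxComplex a b)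
    (hX : SeqNConnectedAt m X x) (hF : Continuous F)
    (hFcl : ∀ W ∈ 𝓝 x, ∀ᶠ β in cofinite, MapsTo F (Icc (a β) (b β)) W)
    (hj : j ≤ m + 1) :
    ∃ h, IsClusteringHomotopyOn (fun β => Icc (a β) (b β)) (boxSkeleton a b j) x F h ∧
      ∀ y ∈ boxSkeleton a b j, h (y, 1) = x := by
  induction j with
  | zero =>
    refine ⟨F ∘ Prod.fst, ⟨fun _ => rfl, (hF.comp continuous_fst).continuousOn, fun W _ =>
      .of_forall fun β p hp => ?_⟩, fun y hy => ?_⟩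
    · simp [boxSkeleton_zero] at hp
    · simp [boxSkeleton_zero] at hy
  | succ j ih =>
    obtain ⟨h, hh, h1⟩ := ih (by lia)
    exact hC.exists_nullhomotopy_succ hX (by lia) hF hFcl hh h1

/-- Once the lower skeleton has been deformed to `x`, the retraction of `box × I` is used once more:
its expansion by `2` at time `1` produces the copy of `F` on the concentric half-size box. -/
lemma exists_homotopy [Fintype ι] [Countable κ] (hC : IsBoxComplex a b)
    (hX : SeqNConnectedAt m X x) (hm : Fintype.card ι ≤ m + 1) (hF : Continuous F)
    (hFcl : ∀ W ∈ 𝓝 x, ∀ᶠ β in cofinite, MapsTo F (Icc (a β) (b β)) W) :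
    ∃ h, IsClusteringHomotopyOn (fun β => Icc (a β) (b β)) (⋃ β, Icc (a β) (b β)) x F h ∧
      (∀ y ∈ boxSkeleton a b (Fintype.card ι), h (y, 1) = x) ∧
      ∀ β, boxDim (a β) (b β) = Fintype.card ι → ∀ y ∈ Icc (a β) (b β),
        h (AffineMap.homothety (midpoint ℝ (a β) (b β)) (1 / 2 : ℝ) y, 1) = F y := by
  obtain ⟨h, hh, h1⟩ := hC.exists_nullhomotopy hX hF hFcl hm
  obtain ⟨h', hh', hskel, hbox⟩ := hC.exists_extension_comp_boxRetraction hF hFcl hh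
  rw [← Nat.card_eq_fintype_card, boxSkeleton_card_add_one] at hh'
  refine ⟨h', hh', fun y hy => (hskel ⟨hy, mem_univ _⟩).trans (h1 y hy), fun β hβ y hy => ?_⟩
  have hy1 := boxGauge_le_one hy
  have hhalf : (0 : ℝ) ≤ 1 / 2 := by norm_num
  rw [hbox β hβ ⟨homothety_mem_Icc hy hhalf (by linarith), mem_univ _⟩, Function.comp_apply,
    boxRetraction_of_mul_le (by rw [boxGauge_homothety hhalf]; norm_num; linarith), hh.zero,
    ← AffineMap.homothety_mul_apply]
  norm_num

end IsBoxComplex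

end Induction

/-! ### Tilings by boxes -/

/-- Nondegenerate boxes `Icc (c k) (d k)` with disjoint interiors, tiling an open set in a locally
finite way. -/
structure IsBoxTiling {ι κ : Type*} (c d : κ → ι → ℝ) : Prop where
  lt : ∀ k i, c k i < d k i
  separated : ∀ k k', k ≠ k' → ∃ i, d k i ≤ c k' i ∨ d k' i ≤ c k i
  isOpen_iUnion : IsOpen (⋃ k, Icc (c k) (d k))
  locallyFiniteOn : LocallyFiniteOn (fun k => Icc (c k) (d k)) (⋃ k, Icc (c k) (d k))

/-- A cell of a box tiling: a nonempty intersection of boxes, encoded by the set of all the boxes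
containing some given point. -/
def TilingCell {ι κ : Type*} (c d : κ → ι → ℝ) : Type _ :=
  {S : Finset κ // S.Nonempty ∧ ∃ y : ι → ℝ, ∀ k, k ∈ S ↔ y ∈ Icc (c k) (d k)}

namespace TilingCell

variable {ι κ : Type*} {c d : κ → ι → ℝ}

instance [Countable κ] : Countable (TilingCell c d) :=
  inferInstanceAs (Countable (Subtype _))

/-- The lower corner of a cell. -/
noncomputable def lower (β : TilingCell c d) : ι → ℝ :=
  β.1.sup' β.2.1 c

/-- The upper corner of a cell. -/
noncomputable def upper (β : TilingCell c d) : ι → ℝ :=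
  β.1.inf' β.2.1 d

lemma mem_Icc_iff {β : TilingCell c d} {y : ι → ℝ} :
    y ∈ Icc β.lower β.upper ↔ ∀ k ∈ β.1, y ∈ Icc (c k) (d k) := by
  simp only [mem_Icc, lower, upper, Finset.sup'_le_iff, Finset.le_inf'_iff, forall_and]

lemma Icc_subset {β : TilingCell c d} {k : κ} (hk : k ∈ β.1) :
    Icc β.lower β.upper ⊆ Icc (c k) (d k) := fun _ hy => mem_Icc_iff.1 hy k hk

lemma exists_forall_mem_iff (β : TilingCell c d) :
    ∃ y ∈ Icc β.lower β.upper, ∀ k, k ∈ β.1 ↔ y ∈ Icc (c k) (d k) :=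
  let ⟨y, hy⟩ := β.2.2
  ⟨y, mem_Icc_iff.2 fun k hk => (hy k).1 hk, hy⟩

lemma Icc_injective : Function.Injective fun β : TilingCell c d => Icc β.lower β.upper := by
  have hsub : ∀ β γ : TilingCell c d, Icc β.lower β.upper ⊆ Icc γ.lower γ.upper → γ.1 ⊆ β.1 := by
    intro β γ hβγ k hk
    obtain ⟨y, hy, hyβ⟩ := β.exists_forall_mem_iff
    exact (hyβ k).2 (mem_Icc_iff.1 (hβγ hy) k hk)
  intro β γ hβγ
  exact Subtype.ext ((hsub γ β hβγ.ge).antisymm (hsub β γ hβγ.le))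

lemma eventually_of_eventually {P : κ → Prop} (hP : ∀ᶠ k in cofinite, P k) :
    ∀ᶠ β : TilingCell c d in cofinite, ∃ k ∈ β.1, P k := by
  classical
  have hfin : {S : Finset κ | S ⊆ Set.Finite.toFinset hP}.Finite :=
    (Finset.finite_toSet (Set.Finite.toFinset hP).powerset).subset fun _ hS =>
      Finset.mem_powerset.2 hS
  refine (hfin.preimage (f := Subtype.val) Subtype.val_injective.injOn).subset fun β hβ k hk => ?_
  exact (Set.Finite.mem_toFinset hP).2 fun hPk => hβ ⟨k, hk, hPk⟩

end TilingCell

namespace IsBoxTiling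

variable {ι κ : Type*} {c d : κ → ι → ℝ} {y : ι → ℝ} {k : κ}

lemma exists_add_smul_mem_Icc [Finite ι] (hT : IsBoxTiling c d) (hy : y ∈ ⋃ k, Icc (c k) (d k))
    (w : ι → ℝ) :
    ∃ k, y ∈ Icc (c k) (d k) ∧ ∃ δ ∈ Ioo (0 : ℝ) 1, y + δ • w ∈ Icc (c k) (d k) := by
  obtain ⟨N, hN, hNmem⟩ := hT.locallyFiniteOn.exists_nhds_forall_mem (fun _ => isClosed_Icc) hy
  have hev : ∀ᶠ δ in 𝓝 (0 : ℝ), y + δ • w ∈ N ∩ ⋃ k, Icc (c k) (d k) :=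
    (show Continuous fun δ : ℝ => y + δ • w by fun_prop).continuousAt.eventually
      (by
        simp only [zero_smul, add_zero]
        exact inter_mem hN (hT.isOpen_iUnion.mem_nhds hy))
  obtain ⟨δ, ⟨hδN, hδU⟩, hδ⟩ := ((hev.filter_mono nhdsWithin_le_nhds).and
    (Ioo_mem_nhdsGT (zero_lt_one (α := ℝ)))).exists
  obtain ⟨k, hk⟩ := mem_iUnion.1 hδU
  exact ⟨k, hNmem k ⟨_, hk, hδN⟩, δ, hδ, hk⟩

open Classical in
/-- Moving from `y` towards the middle of the `k`-th box in all directions but `i` ensures that `i`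
is the only direction which can separate this box from the one reached. -/
lemma exists_add_mul_mem_Icc [Finite ι] (hT : IsBoxTiling c d) (hy : y ∈ Icc (c k) (d k)) (i : ι)
    (s : ℝ) :
    ∃ k', y ∈ Icc (c k') (d k') ∧ (k' = k ∨ d k i ≤ c k' i ∨ d k' i ≤ c k i) ∧
      ∃ δ > 0, y i + δ * s ∈ Icc (c k' i) (d k' i) := by
  let w : ι → ℝ := fun l => if l = i then s else (c k l + d k l) / 2 - y l
  obtain ⟨k', hyk', δ, hδ, hk'⟩ := hT.exists_add_smul_mem_Icc (mem_iUnion.2 ⟨k, hy⟩) w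
  refine ⟨k', hyk', or_iff_not_imp_left.2 fun hne => ?_, δ, hδ.1, ?_⟩
  · obtain ⟨l, hl⟩ := hT.separated k k' (Ne.symm hne)
    by_cases hli : l = i
    · exact hli ▸ hl
    · have hzl := And.intro (hk'.1 l) (hk'.2 l)
      simp only [Pi.add_apply, Pi.smul_apply, w, if_neg hli, smul_eq_mul] at hzl
      have hck := hy.1 l
      have hdk := hy.2 l
      have hlt := hT.lt k l
      exfalso
      rcases hl with hl | hl <;> nlinarith [hδ.1, hδ.2]
  · simpa [w] using And.intro (hk'.1 i) (hk'.2 i)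

lemma mem_boxInterior_of_forall_mem_iff [Finite ι] (hT : IsBoxTiling c d) {β : TilingCell c d}
    (hy : ∀ k, k ∈ β.1 ↔ y ∈ Icc (c k) (d k)) : y ∈ boxInterior β.lower β.upper := by
  have hmem : y ∈ Icc β.lower β.upper := TilingCell.mem_Icc_iff.2 fun k hk => (hy k).1 hk
  refine ⟨hmem, fun i hi => ⟨(hmem.1 i).lt_of_ne fun heq => ?_, (hmem.2 i).lt_of_ne fun heq => ?_⟩⟩
  · obtain ⟨k, hk, hck⟩ : ∃ k ∈ β.1, c k i = y i := by
      obtain ⟨k, hk, hck⟩ := β.1.exists_mem_eq_sup' β.2.1 (c · i)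
      exact ⟨k, hk, by rw [← heq, TilingCell.lower, Finset.sup'_apply, hck]⟩
    obtain ⟨k', hyk', hk', δ, hδ, hδk'⟩ := hT.exists_add_mul_mem_Icc ((hy k).1 hk) i (-1)
    have hup : β.upper i ≤ d k' i := Finset.inf'_le d ((hy k').2 hyk') i
    have hlt := hT.lt k i
    rcases hk' with rfl | hk' | hk' <;> linarith [hδk'.1]
  · obtain ⟨k, hk, hdk⟩ : ∃ k ∈ β.1, d k i = y i := by
      obtain ⟨k, hk, hdk⟩ := β.1.exists_mem_eq_inf' β.2.1 (d · i)
      exact ⟨k, hk, by rw [heq, TilingCell.upper, Finset.inf'_apply, hdk]⟩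
    obtain ⟨k', hyk', hk', δ, hδ, hδk'⟩ := hT.exists_add_mul_mem_Icc ((hy k).1 hk) i 1
    have hlow : c k' i ≤ β.lower i := Finset.le_sup' c ((hy k').2 hyk') i
    have hlt := hT.lt k i
    rcases hk' with rfl | hk' | hk' <;> linarith [hδk'.2]

lemma exists_cell_mem_boxInterior [Finite ι] (hT : IsBoxTiling c d)
    (hy : y ∈ ⋃ k, Icc (c k) (d k)) : ∃ β : TilingCell c d, y ∈ boxInterior β.lower β.upper := by
  have hfin := hT.locallyFiniteOn.finite_setOf_mem hy
  have hmem : ∀ k, k ∈ hfin.toFinset ↔ y ∈ Icc (c k) (d k) := fun k => hfin.mem_toFinset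
  obtain ⟨k, hk⟩ := mem_iUnion.1 hy
  exact ⟨⟨hfin.toFinset, ⟨k, (hmem k).2 hk⟩, y, hmem⟩, hT.mem_boxInterior_of_forall_mem_iff hmem⟩

lemma mem_of_mem_boxInterior [Finite ι] (hT : IsBoxTiling c d) {β : TilingCell c d}
    (hy : y ∈ boxInterior β.lower β.upper) (hk : y ∈ Icc (c k) (d k)) : k ∈ β.1 := by
  obtain ⟨z, hz, hzβ⟩ := β.exists_forall_mem_iff
  obtain ⟨k₀, hk₀⟩ := β.2.1
  obtain ⟨k', hzk', δ, hδ, hδk'⟩ := hT.exists_add_smul_mem_Icc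
    (mem_iUnion.2 ⟨k₀, (hzβ k₀).1 hk₀⟩) fun l => (c k l + d k l) / 2 - y l
  have hk' : k' ∈ β.1 := (hzβ k').2 hzk'
  rcases eq_or_ne k' k with rfl | hne
  · exact hk'
  exfalso
  obtain ⟨l, hl⟩ := hT.separated k' k hne
  have hδl : z l + δ * ((c k l + d k l) / 2 - y l) ∈ Icc (c k' l) (d k' l) := ⟨hδk'.1 l, hδk'.2 l⟩
  have hlow : c k' l ≤ β.lower l := Finset.le_sup' c hk' l
  have hup : β.upper l ≤ d k' l := Finset.inf'_le d hk' l
  have hckl := hk.1 l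
  have hdkl := hk.2 l
  by_cases hβl : β.lower l < β.upper l
  · have hyl := hy.2 l hβl
    rcases hl with hl | hl <;> linarith [hyl.1, hyl.2]
  · have hyz : y l = z l :=
      (apply_eq_of_mem_Icc hy.1 hβl).trans (apply_eq_of_mem_Icc hz hβl).symm
    have hyk' := TilingCell.Icc_subset hk' hy.1
    have hlt := hT.lt k l
    rcases hl with hl | hl <;> nlinarith [hδ.1, hyk'.1 l, hyk'.2 l, hδl.1, hδl.2]

lemma isBoxComplex [Finite ι] (hT : IsBoxTiling c d) :
    IsBoxComplex (TilingCell.lower (c := c) (d := d)) TilingCell.upper where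
  le β := let ⟨_, hy, _⟩ := β.exists_forall_mem_iff; hy.1.trans hy.2
  injective := TilingCell.Icc_injective
  exists_mem_boxInterior β y hy :=
    let ⟨k, hk⟩ := β.2.1
    hT.exists_cell_mem_boxInterior (mem_iUnion.2 ⟨k, TilingCell.Icc_subset hk hy⟩)
  Icc_subset_Icc β γ y hy hyγ z hz := TilingCell.mem_Icc_iff.2 fun k hk =>
    TilingCell.Icc_subset (hT.mem_of_mem_boxInterior hy (TilingCell.Icc_subset hk hyγ)) hz
  locallyFiniteOn := by
    intro y hy
    obtain ⟨β, hβ⟩ := mem_iUnion.1 hy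
    obtain ⟨k, hk⟩ := β.2.1
    obtain ⟨N, hN, hfin⟩ := hT.locallyFiniteOn y (mem_iUnion.2 ⟨k, TilingCell.Icc_subset hk hβ⟩)
    have hev : ∀ᶠ k in cofinite, ¬ (Icc (c k) (d k) ∩ N).Nonempty := by
      simpa only [eventually_cofinite, not_not] using hfin
    refine ⟨N, hN, (TilingCell.eventually_of_eventually hev).subset fun γ hγ hex => ?_⟩
    obtain ⟨l, hl, hlN⟩ := hex
    exact hlN (hγ.mono (inter_subset_inter_left N (TilingCell.Icc_subset hl)))

lemma mem_singleton_iff_midpoint_mem_Icc (hT : IsBoxTiling c d) (l : κ) :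
    l ∈ ({k} : Finset κ) ↔ midpoint ℝ (c k) (d k) ∈ Icc (c l) (d l) := by
  have hmid : ∀ i, midpoint ℝ (c k) (d k) i ∈ Ioo (c k i) (d k i) := fun i => by
    have hlt := hT.lt k i
    rw [pi_midpoint_apply, midpoint_eq_smul_add]
    constructor <;> simp only [smul_eq_mul, invOf_eq_inv] <;> linarith
  rw [Finset.mem_singleton]
  refine ⟨?_, fun hl => ?_⟩
  · rintro rfl
    exact ⟨fun i => (hmid i).1.le, fun i => (hmid i).2.le⟩
  · by_contra hne
    obtain ⟨i, hi⟩ := hT.separated l k hne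
    rcases hi with hi | hi <;> linarith [hl.1 i, hl.2 i, (hmid i).1, (hmid i).2]

/-- A box of a tiling, as one of the cells. -/
def cell (hT : IsBoxTiling c d) (k : κ) : TilingCell c d :=
  ⟨{k}, Finset.singleton_nonempty k, midpoint ℝ (c k) (d k), hT.mem_singleton_iff_midpoint_mem_Icc⟩

lemma lower_cell (hT : IsBoxTiling c d) (k : κ) : (hT.cell k).lower = c k :=
  Finset.sup'_singleton _

lemma upper_cell (hT : IsBoxTiling c d) (k : κ) : (hT.cell k).upper = d k :=
  Finset.inf'_singleton _

lemma cell_injective (hT : IsBoxTiling c d) : Function.Injective hT.cell := fun _ _ h =>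
  Finset.singleton_injective (congrArg Subtype.val h)

lemma iUnion_cell (hT : IsBoxTiling c d) :
    ⋃ β : TilingCell c d, Icc β.lower β.upper = ⋃ k, Icc (c k) (d k) := by
  refine (iUnion_subset fun β => ?_).antisymm (iUnion_subset fun k => ?_)
  · obtain ⟨k, hk⟩ := β.2.1
    exact (TilingCell.Icc_subset hk).trans (subset_iUnion_of_subset k subset_rfl)
  · exact subset_iUnion_of_subset (hT.cell k) (by rw [lower_cell, upper_cell])

lemma boxDim_eq_card [Fintype ι] (hT : IsBoxTiling c d) (k : κ) :
    boxDim (c k) (d k) = Fintype.card ι := by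
  simp [boxDim, hT.lt, ncard_univ]

lemma exists_homotopy [Fintype ι] [Countable κ] (hT : IsBoxTiling c d) {X : Type*}
    [TopologicalSpace X] {x : X} {m : ℕ} (hX : SeqNConnectedAt m X x)
    (hm : Fintype.card ι ≤ m + 1) {F : (ι → ℝ) → X} (hF : Continuous F)
    (hFcl : ∀ W ∈ 𝓝 x, ∀ᶠ k in cofinite, MapsTo F (Icc (c k) (d k)) W) :
    ∃ h, IsClusteringHomotopyOn (fun k => Icc (c k) (d k)) (⋃ k, Icc (c k) (d k)) x F h ∧
      (∀ k, ∀ y ∈ boxBoundary (c k) (d k), h (y, 1) = x) ∧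
      ∀ k, ∀ y ∈ Icc (c k) (d k),
        h (AffineMap.homothety (midpoint ℝ (c k) (d k)) (1 / 2 : ℝ) y, 1) = F y := by
  have hC := hT.isBoxComplex
  obtain ⟨h, hh, hskel, hbox⟩ := hC.exists_homotopy hX hm hF fun W hW =>
    (TilingCell.eventually_of_eventually (hFcl W hW)).mono fun β ⟨_, hk, hβ⟩ =>
      hβ.mono_left (TilingCell.Icc_subset hk)
  have hcells := hh.comp_injective hT.cell_injective
  have hdim : ∀ k, boxDim (hT.cell k).lower (hT.cell k).upper = Fintype.card ι := fun k => by
    rw [lower_cell, upper_cell, hT.boxDim_eq_card]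
  simp only [Function.comp_def, hT.lower_cell, hT.upper_cell, hT.iUnion_cell] at hcells
  refine ⟨h, hcells, fun k y hy => hskel y ?_, fun k y hy => ?_⟩
  · rw [← hdim k]
    exact hC.boxBoundary_subset_boxSkeleton (by rwa [lower_cell, upper_cell])
  · have hk := hbox (hT.cell k) (hdim k)
    rw [lower_cell, upper_cell] at hk
    exact hk y hy

end IsBoxTiling

/-! ### Whitney covers -/

section Whitney

variable {ι κ : Type*}

/-- The inclusion of the cube `ι → I` in `ι → ℝ`. -/
def cubeVal (y : ι → I) (i : ι) : ℝ := y i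

/-- The coordinatewise retraction of `ι → ℝ` onto the cube `ι → I`. -/
noncomputable def cubeClamp (z : ι → ℝ) (i : ι) : I := projIcc 0 1 zero_le_one (z i)

lemma continuous_cubeVal : Continuous (cubeVal (ι := ι)) :=
  continuous_pi fun i => continuous_subtype_val.comp (continuous_apply i)

lemma continuous_cubeClamp : Continuous (cubeClamp (ι := ι)) :=
  continuous_pi fun i => continuous_projIcc.comp (continuous_apply i)

lemma cubeClamp_cubeVal (y : ι → I) : cubeClamp (cubeVal y) = y :=
  funext fun i => projIcc_val zero_le_one (y i)

lemma cubeVal_cubeClamp {z : ι → ℝ} (hz : z ∈ Icc 0 1) : cubeVal (cubeClamp z) = z :=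
  funext fun i => congrArg Subtype.val (projIcc_of_mem zero_le_one ⟨hz.1 i, hz.2 i⟩)

/-- The nondegenerate boxes `Icc (c k) (d k)`, lying in `(0,1)^ι`, form a Whitney cover of the open
set `U`. Local finiteness is not a field, but `IsWhitneyCover.locallyFiniteOn`. -/
structure IsWhitneyCover (U : Set (ι → I)) (c d : κ → ι → ℝ) : Prop where
  isOpen : IsOpen U
  pos : ∀ k i, 0 < c k i
  lt : ∀ k i, c k i < d k i
  lt_one : ∀ k i, d k i < 1
  mem_iff : ∀ y, y ∈ U ↔ ∃ k, cubeVal y ∈ Icc (c k) (d k)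
  separated : ∀ k k', k ≠ k' → ∃ i, d k i ≤ c k' i ∨ d k' i ≤ c k i
  eventually_subset : ∀ V : Set (ι → I), IsOpen V → frontier U ⊆ V →
    ∀ᶠ k in cofinite, cubeVal ⁻¹' Icc (c k) (d k) ⊆ V

namespace IsWhitneyCover

variable {U : Set (ι → I)} {c d : κ → ι → ℝ}

lemma Icc_subset_Icc (hC : IsWhitneyCover U c d) (k : κ) : Icc (c k) (d k) ⊆ Icc 0 1 :=
  Set.Icc_subset_Icc (fun i => (hC.pos k i).le) fun i => (hC.lt_one k i).le

lemma preimage_iUnion_Icc (hC : IsWhitneyCover U c d) : cubeVal ⁻¹' ⋃ k, Icc (c k) (d k) = U :=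
  ext fun y => by rw [mem_preimage, mem_iUnion, hC.mem_iff]

lemma iUnion_Icc_eq (hC : IsWhitneyCover U c d) :
    ⋃ k, Icc (c k) (d k) = (univ.pi fun _ => Ioo 0 1) ∩ cubeClamp ⁻¹' U := by
  ext z
  rw [mem_iUnion, mem_inter_iff, mem_preimage, hC.mem_iff]
  constructor
  · rintro ⟨k, hk⟩
    refine ⟨fun i _ => ⟨(hC.pos k i).trans_le (hk.1 i), (hk.2 i).trans_lt (hC.lt_one k i)⟩, k, ?_⟩
    rwa [cubeVal_cubeClamp (hC.Icc_subset_Icc k hk)]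
  · rintro ⟨hz, k, hk⟩
    rw [cubeVal_cubeClamp ⟨fun i => (hz i trivial).1.le, fun i => (hz i trivial).2.le⟩] at hk
    exact ⟨k, hk⟩

lemma eventually_mapsTo_cubeClamp (hC : IsWhitneyCover U c d) {V : Set (ι → I)} (hV : IsOpen V)
    (hUV : frontier U ⊆ V) : ∀ᶠ k in cofinite, MapsTo cubeClamp (Icc (c k) (d k)) V := by
  filter_upwards [hC.eventually_subset V hV hUV] with k hk z hz
  apply hk
  rwa [mem_preimage, cubeVal_cubeClamp (hC.Icc_subset_Icc k hz)]

lemma locallyFiniteOn (hC : IsWhitneyCover U c d) :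
    LocallyFiniteOn (fun k => Icc (c k) (d k)) (⋃ k, Icc (c k) (d k)) := by
  intro z hz
  have hzU : cubeClamp z ∈ U := (hC.iUnion_Icc_eq ▸ hz).2
  obtain ⟨B, hB, hBcl, hBU⟩ := exists_mem_nhds_isClosed_subset (hC.isOpen.mem_nhds hzU)
  have hfrontier : frontier U ⊆ Bᶜ := fun y hy hyB => (hC.isOpen.frontier_eq ▸ hy).2 (hBU hyB)
  refine ⟨cubeClamp ⁻¹' B, continuous_cubeClamp.continuousAt hB,
    (hC.eventually_mapsTo_cubeClamp hBcl.isOpen_compl hfrontier).subset ?_⟩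
  rintro k ⟨w, hwk, hwB⟩ hk
  exact hk hwk hwB

lemma isBoxTiling [Finite ι] (hC : IsWhitneyCover U c d) : IsBoxTiling c d where
  lt := hC.lt
  separated := hC.separated
  isOpen_iUnion := by
    rw [hC.iUnion_Icc_eq]
    exact (isOpen_set_pi finite_univ fun _ _ => isOpen_Ioo).inter
      (hC.isOpen.preimage continuous_cubeClamp)
  locallyFiniteOn := hC.locallyFiniteOn

open Classical in
theorem exists_homotopy [Fintype ι] [Countable κ] (hC : IsWhitneyCover U c d) {X : Type*}
    [TopologicalSpace X] {x : X} {m : ℕ} (hX : SeqNConnectedAt m X x)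
    (hm : Fintype.card ι ≤ m + 1) (f : C(ι → I, X)) (hf : ∀ y ∈ frontier U, f y = x) :
    ∃ H : C((ι → I) × I, X), (∀ y, H (y, 0) = f y) ∧ (∀ y ∉ U, ∀ t, H (y, t) = f y) ∧
      (∀ k y, cubeVal y ∈ boxBoundary (c k) (d k) → H (y, 1) = x) ∧
      ∀ k y z, cubeVal z ∈ Icc (c k) (d k) →
        cubeVal y = AffineMap.homothety (midpoint ℝ (c k) (d k)) (1 / 2 : ℝ) (cubeVal z) →
        H (y, 1) = f z := by
  obtain ⟨h, hh, hbd, hhalf⟩ := hC.isBoxTiling.exists_homotopy (F := f ∘ cubeClamp) hX hm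
    (f.continuous.comp continuous_cubeClamp) fun W hW =>
      (hC.eventually_mapsTo_cubeClamp (isOpen_interior.preimage f.continuous) fun y hy =>
        mem_preimage.2 ((hf y hy).symm ▸ mem_interior_iff_mem_nhds.2 hW)).mono
          fun k hk z hz => interior_subset (hk hz)
  have hU := hC.preimage_iUnion_Icc
  let H : C((ι → I) × I, X) :=
    ⟨fun p => if cubeVal p.1 ∈ ⋃ k, Icc (c k) (d k) then h (cubeVal p.1, p.2) else f p.1,
      hh.continuous_ite_preimage (fun _ => isClosed_Icc) continuous_cubeVal
        (hU.symm ▸ hC.isOpen) f.continuous (hU.symm ▸ hf)⟩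
  have hHU : ∀ k y t, cubeVal y ∈ Icc (c k) (d k) → H (y, t) = h (cubeVal y, t) :=
    fun k y t hy => if_pos (mem_iUnion.2 ⟨k, hy⟩)
  have hHf : ∀ y ∉ U, ∀ t, H (y, t) = f y := fun y hy t => if_neg fun hmem => hy (hU ▸ hmem)
  refine ⟨H, fun y => ?_, hHf, fun k y hy => ?_, fun k y z hz hyz => ?_⟩
  · by_cases hy : y ∈ U
    · obtain ⟨k, hk⟩ := (hC.mem_iff y).1 hy
      rw [hHU k y 0 hk, hh.zero, Function.comp_apply, cubeClamp_cubeVal]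
    · exact hHf y hy 0
  · rw [hHU k y 1 (boxBoundary_subset hy), hbd k _ hy]
  · have hy : cubeVal y ∈ Icc (c k) (d k) := by
      rw [hyz]
      exact homothety_mem_Icc hz (by norm_num) (by linarith [boxGauge_le_one hz])
    rw [hHU k y 1 hy, hyz, hhalf k _ hz, Function.comp_apply, cubeClamp_cubeVal]

end IsWhitneyCover

end Whitney

section Cube

variable {n : ℕ} {a b c d : Fin n → ℝ} {y : Fin n → I}

lemma inCube_iff : inCube c d y ↔ cubeVal y ∈ Icc c d := forall_and

lemma cubeVal_mem_boxBoundary (hcd : ∀ i, c i < d i) (hy : onCubeBdry c d y) :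
    cubeVal y ∈ boxBoundary c d :=
  mem_boxBoundary_iff.2 ⟨inCube_iff.1 hy.1, hy.2.imp fun i hi => ⟨hcd i, hi⟩⟩

/-- Otherwise moving one coordinate of `y` to `0` or `1` would not leave the cube. -/
lemma corners_mem_Ioo (hy : inCube c d y)
    (hint : ∀ z, inCube c d z → ∀ i, (0 : ℝ) < z i ∧ (z i : ℝ) < 1) (i : Fin n) :
    0 < c i ∧ d i < 1 := by
  have hupdate : ∀ t : I, c i ≤ t → t ≤ d i → (0 : ℝ) < t ∧ (t : ℝ) < 1 := by
    intro t hct htd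
    have hmem : inCube c d (Function.update y i t) := by
      intro l
      rcases eq_or_ne l i with rfl | hl
      · simpa using And.intro hct htd
      · simpa [Function.update_of_ne hl] using hy l
    simpa using hint _ hmem i
  have hyi := hy i
  constructor <;> by_contra! hle
  · exact (hupdate 0 hle ((y i).2.1.trans hyi.2)).1.false
  · exact (hupdate 1 (hyi.1.trans (y i).2.2) hle).2.false

lemma exists_le_of_forall_not_inCubeInt (hab : ∀ i, a i < b i) (hcd : ∀ i, c i < d i)
    (ha : ∀ i, 0 < a i) (hb : ∀ i, b i < 1)
    (hdisj : ∀ y : Fin n → I, ¬ (inCubeInt a b y ∧ inCubeInt c d y)) :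
    ∃ i, b i ≤ c i ∨ d i ≤ a i := by
  by_contra! hlt
  choose r hr using fun i => exists_between (show max (a i) (c i) < min (b i) (d i) from
    max_lt (lt_min (hab i) (hlt i).2) (lt_min (hlt i).1 (hcd i)))
  simp only [max_lt_iff, lt_min_iff] at hr
  have hval : cubeVal (cubeClamp r) = r := cubeVal_cubeClamp
    ⟨fun i => ((ha i).trans (hr i).1.1).le, fun i => ((hr i).2.1.trans (hb i)).le⟩
  have hvali : ∀ i, (cubeClamp r i : ℝ) = r i := congrFun hval
  refine hdisj (cubeClamp r) ⟨fun i => ?_, fun i => ?_⟩ <;> rw [hvali]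
  exacts [⟨(hr i).1.1, (hr i).2.1⟩, ⟨(hr i).1.2, (hr i).2.2⟩]

lemma add_div_mul_mem_Icc (hcd : c ≤ d) (hab : ∀ i, a i < b i) (hy : inCube a b y) :
    (fun i => c i + ((y i : ℝ) - a i) / (b i - a i) * (d i - c i)) ∈ Icc c d := by
  have hratio : ∀ i, ((y i : ℝ) - a i) / (b i - a i) ∈ Icc (0 : ℝ) 1 := fun i =>
    ⟨div_nonneg (sub_nonneg.2 (hy i).1) (sub_nonneg.2 (hab i).le),
      (div_le_one (sub_pos.2 (hab i))).2 (by linarith [(hy i).2])⟩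
  constructor <;> intro i <;> have hi : c i ≤ d i := hcd i <;>
    nlinarith [(hratio i).1, (hratio i).2]

lemma cubeVal_cubeAffine (hc : 0 ≤ c) (hcd : c ≤ d) (hd : d ≤ 1) (hab : ∀ i, a i < b i)
    (hy : inCube a b y) : cubeVal (cubeAffine a b c d y) =
      fun i => c i + ((y i : ℝ) - a i) / (b i - a i) * (d i - c i) :=
  cubeVal_cubeClamp (Set.Icc_subset_Icc hc hd (add_div_mul_mem_Icc hcd hab hy))

lemma inCube_cubeAffine (hc : 0 ≤ c) (hcd : c ≤ d) (hd : d ≤ 1) (hab : ∀ i, a i < b i)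
    (hy : inCube a b y) : inCube c d (cubeAffine a b c d y) := by
  rw [inCube_iff, cubeVal_cubeAffine hc hcd hd hab hy]
  exact add_div_mul_mem_Icc hcd hab hy

lemma cubeVal_eq_homothety_cubeAffine (hc : 0 ≤ c) (hcd : ∀ i, c i < d i) (hd : d ≤ 1)
    (hy : inCube (fun i => (3 * c i + d i) / 4) (fun i => (c i + 3 * d i) / 4) y) :
    cubeVal y = AffineMap.homothety (midpoint ℝ c d) (1 / 2 : ℝ) (cubeVal (cubeAffine
      (fun i => (3 * c i + d i) / 4) (fun i => (c i + 3 * d i) / 4) c d y)) := by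
  rw [cubeVal_cubeAffine hc (fun i => (hcd i).le) hd (fun i => by linarith [hcd i]) hy]
  funext i
  have hlen : (c i + 3 * d i) / 4 - (3 * c i + d i) / 4 = (d i - c i) / 2 := by ring
  have hne : d i - c i ≠ 0 := (sub_pos.2 (hcd i)).ne'
  rw [homothety_midpoint_apply, cubeVal, hlen]
  field_simp
  ring

theorem isWhitneyCover_of_inCube {κ : Type*} {U : Set (Fin n → I)} {c d : κ → Fin n → ℝ}
    (hUopen : IsOpen U) (hUint : ∀ y ∈ U, ∀ i, (0 : ℝ) < y i ∧ (y i : ℝ) < 1)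
    (hcd : ∀ k i, c k i < d k i) (hcover : U = ⋃ k, {y | inCube (c k) (d k) y})
    (hdisjoint : ∀ k k', k ≠ k' → ∀ y : Fin n → I,
      ¬ (inCubeInt (c k) (d k) y ∧ inCubeInt (c k') (d k') y))
    (hshrink : ∀ V : Set (Fin n → I), IsOpen V → frontier U ⊆ V →
      {k | ¬ {y | inCube (c k) (d k) y} ⊆ V}.Finite) :
    IsWhitneyCover U (fun k : {k // ∃ y, inCube (c k) (d k) y} => c k) (fun k => d k) := by
  have hU : ∀ y, y ∈ U ↔ ∃ k, inCube (c k) (d k) y := fun y => by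
    rw [hcover, mem_iUnion]
    rfl
  have hcorners : ∀ k : {k // ∃ y, inCube (c k) (d k) y}, ∀ i, 0 < c k i ∧ d k i < 1 := by
    rintro ⟨k, y, hy⟩
    exact corners_mem_Ioo hy fun z hz => hUint z ((hU z).2 ⟨k, hz⟩)
  refine ⟨hUopen, fun k i => (hcorners k i).1, fun k => hcd k, fun k i => (hcorners k i).2,
    fun y => ?_, fun k k' hne => ?_, fun V hV hUV => ?_⟩
  · simp only [hU, ← inCube_iff]
    exact ⟨fun ⟨k, hk⟩ => ⟨⟨k, y, hk⟩, hk⟩, fun ⟨k, hk⟩ => ⟨k, hk⟩⟩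
  · exact exists_le_of_forall_not_inCubeInt (hcd k) (hcd k') (fun i => (hcorners k i).1)
      (fun i => (hcorners k i).2) (hdisjoint k k' (Subtype.val_injective.ne hne))
  · refine ((hshrink V hV hUV).preimage Subtype.val_injective.injOn).subset fun k hk hsub => ?_
    exact hk fun y hy => hsub (inCube_iff.2 hy)

end Cube

/-- **n-loop factorization along a Whitney cover.** Let `n ≥ 1`, `X` sequentially
`(n−1)`-connected at `x₀`, `f : I^n → X`, and `U` an open subset of the open cube `(0,1)^n`
with `f(∂U) = {x₀}`. Then for every Whitney cover of `U` — a countable family of `n`-cubes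
with union `U`, pairwise disjoint interiors, each meeting only finitely many others, and
all but finitely many contained in any neighborhood of `∂U` — there is a map `g : I^n → X`
homotopic to `f` by a homotopy constant on `I^n \ U`, with `g(∂C) = {x₀}` for every cube `C`
of the cover, and `g` equal to `f|_C` on some `n`-cube `K ⊆ int C`, up to the canonical
affine reparameterization. -/
theorem n_loop_factorization {X : Type*} [TopologicalSpace X] (n : ℕ) (hn : 1 ≤ n)
    (x₀ : X) (hX : SeqNConnectedAt (n - 1) X x₀)
    (f : C((Fin n → I), X)) (U : Set (Fin n → I)) (hUopen : IsOpen U)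
    (hUint : ∀ y ∈ U, ∀ i, (0:ℝ) < y i ∧ (y i : ℝ) < 1)
    (hfU : ∀ y ∈ frontier U, f y = x₀)
    (ι : Type*) [Countable ι] (cC dC : ι → Fin n → ℝ)
    (hCcube : ∀ k i, cC k i < dC k i)
    (hcover : U = ⋃ k, {y | inCube (cC k) (dC k) y})
    (hdisjint : ∀ k k', k ≠ k' → ∀ y : Fin n → I,
      ¬(inCubeInt (cC k) (dC k) y ∧ inCubeInt (cC k') (dC k') y))
    (hlocfin : ∀ k, {k' | k' ≠ k ∧
      ∃ y : Fin n → I, inCube (cC k) (dC k) y ∧ inCube (cC k') (dC k') y}.Finite)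
    (hshrink : ∀ V : Set (Fin n → I), IsOpen V → frontier U ⊆ V →
      {k | ¬ {y | inCube (cC k) (dC k) y} ⊆ V}.Finite) :
    ∃ g : C((Fin n → I), X),
      (∃ H : C((Fin n → I) × I, X),
        (∀ y, H (y, 0) = f y) ∧ (∀ y, H (y, 1) = g y) ∧
        ∀ y t, y ∉ U → H (y, t) = f y) ∧
      (∀ k y, onCubeBdry (cC k) (dC k) y → g y = x₀) ∧
      (∀ k, ∃ cK dK : Fin n → ℝ,
        (∀ i, cC k i < cK i ∧ cK i < dK i ∧ dK i < dC k i) ∧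
        ∀ y : Fin n → I, inCube cK dK y →
          g y = f (cubeAffine cK dK (cC k) (dC k) y)) := by
  have hC := isWhitneyCover_of_inCube hUopen hUint hCcube hcover hdisjint hshrink
  obtain ⟨H, hH0, hHU, hHbdry, hHhalf⟩ :=
    hC.exists_homotopy hX ((Fintype.card_fin n).trans_le le_tsub_add) f hfU
  refine ⟨H.comp ⟨fun y => (y, 1), by fun_prop⟩, ⟨H, hH0, fun _ => rfl, fun y t hy => hHU y hy t⟩,
    fun k y hy => hHbdry ⟨k, y, hy.1⟩ y (cubeVal_mem_boxBoundary (hCcube k) hy),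
    fun k => ⟨fun i => (3 * cC k i + dC k i) / 4, fun i => (cC k i + 3 * dC k i) / 4,
      fun i => ?_, fun y hy => ?_⟩⟩
  · have hi := hCcube k i
    refine ⟨?_, ?_, ?_⟩ <;> linarith
  · have hyC : inCube (cC k) (dC k) y := fun i => by
      constructor <;> linarith [hCcube k i, (hy i).1, (hy i).2]
    have hle : cC k ≤ dC k := fun i => (hCcube k i).le
    obtain ⟨h0, h1⟩ := (Icc_subset_Icc_iff hle).1 (hC.Icc_subset_Icc ⟨k, y, hyC⟩)
    exact hHhalf ⟨k, y, hyC⟩ y _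
      (inCube_iff.1 (inCube_cubeAffine h0 hle h1 (fun i => by linarith [hCcube k i]) hy))
      (cubeVal_eq_homothety_cubeAffine h0 (hCcube k) h1 hy)
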